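/- (i) In every almost two-coloured perfect matching of the uncrossing gadget U, the vertices w, v, z_1, z_2 all receive the same colour, and the vertices a, b, z_3, z_4 all receive the same colour. (ii) Conversely, for every choice of a colour α for a, b, z_3, z_4 and a colour β for w, v, z_1, z_2 (α, β ∈ {black, white}, not necessarily distinct), there exists an almost two-coloured perfect matching of U in which a, b, z_3, z_4 all receive colour α and w, v, z_1, z_2 all receive colour β. -/

import Mathlib

/-- An almost two-coloured perfect matching of `G`: a two-colouring (black/white,
modelled by `Bool`) of the vertices in which every vertex of degree at least two
(i.e. having two distinct neighbours) has exactly one neighbour of the same colour. -/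
def IsAlmostTCPM {V : Type*} (G : SimpleGraph V) (c : V → Bool) : Prop :=
  ∀ v, (∃ w₁ w₂, w₁ ≠ w₂ ∧ G.Adj v w₁ ∧ G.Adj v w₂) →
    ∃! w, G.Adj v w ∧ c w = c v

/-- The vertices of the uncrossing gadget `U`. -/
inductive UV
| a | b | c | d | e | f | g | h | i | j | k | l | m | n | o | p | q | r
| s | t | u | v | w | x | z1 | z2 | z3 | z4
deriving DecidableEq

open UV in
/-- The edges of the uncrossing gadget `U`. -/
def UEdges : List (UV × UV) :=
  [(z3,z4),(u,z3),(x,z3),(u,x),(u,n),(x,q),(n,l),(n,m),(p,q),(q,r),(m,p),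
   (l,v),(v,w),(k,l),(k,m),(o,p),(o,r),(f,k),(i,o),(e,f),(d,f),(h,i),(i,j),
   (d,h),(c,e),(c,d),(g,h),(g,j),(e,v),(b,c),(a,b),(b,g),(s,t),(j,s),(r,t),
   (z1,z2),(s,z1),(t,z1)]

/-- The uncrossing gadget `U`. -/
def UG : SimpleGraph UV := SimpleGraph.fromRel (fun x₁ x₂ => (x₁, x₂) ∈ UEdges)

/-- Exactly one of `x, y, z` equals `v`. -/
abbrev ExOne (v x y z : Bool) : Prop :=
  (x = v ∧ y ≠ v ∧ z ≠ v) ∨ (x ≠ v ∧ y = v ∧ z ≠ v) ∨ (x ≠ v ∧ y ≠ v ∧ z = v)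

/-- The matching condition at a vertex with exactly three neighbours. -/
lemma three {V : Type*} {G : SimpleGraph V} (c : V → Bool) {v x y z : V}
    (hxy : x ≠ y) (hxz : x ≠ z) (hyz : y ≠ z)
    (hadj : ∀ w, G.Adj v w ↔ w = x ∨ w = y ∨ w = z) :
    ((∃ w₁ w₂, w₁ ≠ w₂ ∧ G.Adj v w₁ ∧ G.Adj v w₂) → ∃! w, G.Adj v w ∧ c w = c v) ↔
      ExOne (c v) (c x) (c y) (c z) := by
  have hd : ∃ w₁ w₂, w₁ ≠ w₂ ∧ G.Adj v w₁ ∧ G.Adj v w₂ :=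
    ⟨x, y, hxy, (hadj x).2 (by simp), (hadj y).2 (by simp)⟩
  rw [imp_iff_right hd]
  simp only [hadj]
  constructor
  · rintro ⟨w, ⟨hw, hc⟩, hu⟩
    have ux := fun h => hu x ⟨Or.inl rfl, h⟩
    have uy := fun h => hu y ⟨Or.inr (Or.inl rfl), h⟩
    have uz := fun h => hu z ⟨Or.inr (Or.inr rfl), h⟩
    rcases hw with rfl | rfl | rfl
    · exact Or.inl ⟨hc, fun h => hxy (uy h).symm, fun h => hxz (uz h).symm⟩
    · exact Or.inr (Or.inl ⟨fun h => hxy (ux h), hc, fun h => hyz (uz h).symm⟩)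
    · exact Or.inr (Or.inr ⟨fun h => hxz (ux h), fun h => hyz (uy h), hc⟩)
  · rintro (⟨h1, h2, h3⟩ | ⟨h1, h2, h3⟩ | ⟨h1, h2, h3⟩)
    · exact ⟨x, ⟨by simp, h1⟩, by rintro w ⟨rfl | rfl | rfl, h⟩ <;> first | rfl | contradiction⟩
    · exact ⟨y, ⟨by simp, h2⟩, by rintro w ⟨rfl | rfl | rfl, h⟩ <;> first | rfl | contradiction⟩
    · exact ⟨z, ⟨by simp, h3⟩, by rintro w ⟨rfl | rfl | rfl, h⟩ <;> first | rfl | contradiction⟩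

/-- There is no condition at a vertex with one neighbour. -/
lemma single {V : Type*} {G : SimpleGraph V} (c : V → Bool) {v x : V}
    (hadj : ∀ w, G.Adj v w ↔ w = x) :
    ((∃ w₁ w₂, w₁ ≠ w₂ ∧ G.Adj v w₁ ∧ G.Adj v w₂) → ∃! w, G.Adj v w ∧ c w = c v) := by
  rintro ⟨w₁, w₂, hne, h1, h2⟩
  exact absurd (((hadj _).1 h1).trans ((hadj _).1 h2).symm) hne

lemma adj_a (y : UV) : UG.Adj .a y ↔ y = .b := by
  cases y <;> simp [UG, UEdges]
lemma adj_b (y : UV) : UG.Adj .b y ↔ y = .c ∨ y = .a ∨ y = .g := by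
  cases y <;> simp [UG, UEdges]
lemma adj_c (y : UV) : UG.Adj .c y ↔ y = .e ∨ y = .d ∨ y = .b := by
  cases y <;> simp [UG, UEdges]
lemma adj_d (y : UV) : UG.Adj .d y ↔ y = .f ∨ y = .h ∨ y = .c := by
  cases y <;> simp [UG, UEdges]
lemma adj_e (y : UV) : UG.Adj .e y ↔ y = .f ∨ y = .c ∨ y = .v := by
  cases y <;> simp [UG, UEdges]
lemma adj_f (y : UV) : UG.Adj .f y ↔ y = .k ∨ y = .e ∨ y = .d := by
  cases y <;> simp [UG, UEdges]
lemma adj_g (y : UV) : UG.Adj .g y ↔ y = .h ∨ y = .j ∨ y = .b := by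
  cases y <;> simp [UG, UEdges]
lemma adj_h (y : UV) : UG.Adj .h y ↔ y = .i ∨ y = .d ∨ y = .g := by
  cases y <;> simp [UG, UEdges]
lemma adj_i (y : UV) : UG.Adj .i y ↔ y = .o ∨ y = .h ∨ y = .j := by
  cases y <;> simp [UG, UEdges]
lemma adj_j (y : UV) : UG.Adj .j y ↔ y = .i ∨ y = .g ∨ y = .s := by
  cases y <;> simp [UG, UEdges]
lemma adj_k (y : UV) : UG.Adj .k y ↔ y = .l ∨ y = .m ∨ y = .f := by
  cases y <;> simp [UG, UEdges]
lemma adj_l (y : UV) : UG.Adj .l y ↔ y = .n ∨ y = .v ∨ y = .k := by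
  cases y <;> simp [UG, UEdges]
lemma adj_m (y : UV) : UG.Adj .m y ↔ y = .n ∨ y = .p ∨ y = .k := by
  cases y <;> simp [UG, UEdges]
lemma adj_n (y : UV) : UG.Adj .n y ↔ y = .u ∨ y = .l ∨ y = .m := by
  cases y <;> simp [UG, UEdges]
lemma adj_o (y : UV) : UG.Adj .o y ↔ y = .p ∨ y = .r ∨ y = .i := by
  cases y <;> simp [UG, UEdges]
lemma adj_p (y : UV) : UG.Adj .p y ↔ y = .q ∨ y = .m ∨ y = .o := by
  cases y <;> simp [UG, UEdges]
lemma adj_q (y : UV) : UG.Adj .q y ↔ y = .x ∨ y = .p ∨ y = .r := by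
  cases y <;> simp [UG, UEdges]
lemma adj_r (y : UV) : UG.Adj .r y ↔ y = .q ∨ y = .o ∨ y = .t := by
  cases y <;> simp [UG, UEdges]
lemma adj_s (y : UV) : UG.Adj .s y ↔ y = .t ∨ y = .j ∨ y = .z1 := by
  cases y <;> simp [UG, UEdges]
lemma adj_t (y : UV) : UG.Adj .t y ↔ y = .s ∨ y = .r ∨ y = .z1 := by
  cases y <;> simp [UG, UEdges]
lemma adj_u (y : UV) : UG.Adj .u y ↔ y = .z3 ∨ y = .x ∨ y = .n := by
  cases y <;> simp [UG, UEdges]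
lemma adj_v (y : UV) : UG.Adj .v y ↔ y = .l ∨ y = .w ∨ y = .e := by
  cases y <;> simp [UG, UEdges]
lemma adj_w (y : UV) : UG.Adj .w y ↔ y = .v := by
  cases y <;> simp [UG, UEdges]
lemma adj_x (y : UV) : UG.Adj .x y ↔ y = .z3 ∨ y = .u ∨ y = .q := by
  cases y <;> simp [UG, UEdges]
lemma adj_z1 (y : UV) : UG.Adj .z1 y ↔ y = .z2 ∨ y = .s ∨ y = .t := by
  cases y <;> simp [UG, UEdges]
lemma adj_z2 (y : UV) : UG.Adj .z2 y ↔ y = .z1 := by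
  cases y <;> simp [UG, UEdges]
lemma adj_z3 (y : UV) : UG.Adj .z3 y ↔ y = .z4 ∨ y = .u ∨ y = .x := by
  cases y <;> simp [UG, UEdges]
lemma adj_z4 (y : UV) : UG.Adj .z4 y ↔ y = .z3 := by
  cases y <;> simp [UG, UEdges]

set_option maxRecDepth 100000 in
set_option synthInstance.maxSize 100000 in
set_option synthInstance.maxHeartbeats 4000000 in
set_option maxHeartbeats 4000000 in
lemma search : ∀ b : Bool, ∀ c : Bool, ∀ a : Bool, ∀ g : Bool, 
    ExOne b c a g → ∀ e : Bool, ∀ d : Bool, 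
    ExOne c e d b → ∀ h : Bool, ∀ j : Bool, 
    ExOne g h j b → ∀ f : Bool, 
    ExOne d f h c → ∀ v : Bool, 
    ExOne e f c v → ∀ i : Bool, 
    ExOne h i d g → ∀ s : Bool, 
    ExOne j i g s → ∀ k : Bool, 
    ExOne f k e d → ∀ l : Bool, ∀ w : Bool, 
    ExOne v l w e → ∀ o : Bool, 
    ExOne i o h j → ∀ t : Bool, ∀ z1 : Bool, 
    ExOne s t j z1 → ∀ m : Bool, 
    ExOne k l m f → ∀ n : Bool, 
    ExOne l n v k → ∀ p : Bool, 
    ExOne m n p k → ∀ r : Bool, 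
    ExOne o p r i → 
    ExOne t s r z1 → ∀ z2 : Bool, 
    ExOne z1 z2 s t → ∀ u : Bool, 
    ExOne n u l m → ∀ q : Bool, 
    ExOne p q m o → 
    ExOne r q o t → ∀ z3 : Bool, ∀ x : Bool, 
    ExOne u z3 x n → 
    ExOne q x p r → 
    ExOne x z3 u q → ∀ z4 : Bool, 
    ExOne z3 z4 u x → 
    (w = v ∧ v = z1 ∧ z1 = z2) ∧ (a = b ∧ b = z3 ∧ z3 = z4) := by
  decide +kernel

/-- The explicit colourings. -/
def col (α β : Bool) : UV → Bool
  | .a => α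
  | .b => α
  | .c => !α
  | .d => β
  | .e => !β
  | .f => α
  | .g => !α
  | .h => !β
  | .i => α
  | .j => β
  | .k => !α
  | .l => !β
  | .m => β
  | .n => α
  | .o => !α
  | .p => !β
  | .q => α
  | .r => β
  | .s => !β
  | .t => !β
  | .u => !α
  | .v => β
  | .w => β
  | .x => !α
  | .z1 => β
  | .z2 => β
  | .z3 => α
  | .z4 => α

/-- (i) In every almost two-coloured perfect matching of `U` the vertices
`w, v, z₁, z₂` receive the same colour and the vertices `a, b, z₃, z₄` receive
the same colour.  (ii) Conversely, for all colours `α` (for `a, b, z₃, z₄`) and `β`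
(for `w, v, z₁, z₂`) there is an almost two-coloured perfect matching of `U`
realising them. -/
theorem stmt_6 :
    (∀ c : UV → Bool, IsAlmostTCPM UG c →
      (c UV.w = c UV.v ∧ c UV.v = c UV.z1 ∧ c UV.z1 = c UV.z2) ∧
      (c UV.a = c UV.b ∧ c UV.b = c UV.z3 ∧ c UV.z3 = c UV.z4)) ∧
    (∀ α β : Bool, ∃ c : UV → Bool, IsAlmostTCPM UG c ∧
      c UV.a = α ∧ c UV.b = α ∧ c UV.z3 = α ∧ c UV.z4 = α ∧
      c UV.w = β ∧ c UV.v = β ∧ c UV.z1 = β ∧ c UV.z2 = β) := by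
  constructor
  · intro k hk
    have g_b := (three k (by decide) (by decide) (by decide) adj_b).1 (hk .b)
    have g_c := (three k (by decide) (by decide) (by decide) adj_c).1 (hk .c)
    have g_d := (three k (by decide) (by decide) (by decide) adj_d).1 (hk .d)
    have g_e := (three k (by decide) (by decide) (by decide) adj_e).1 (hk .e)
    have g_f := (three k (by decide) (by decide) (by decide) adj_f).1 (hk .f)
    have g_g := (three k (by decide) (by decide) (by decide) adj_g).1 (hk .g)
    have g_h := (three k (by decide) (by decide) (by decide) adj_h).1 (hk .h)
    have g_i := (three k (by decide) (by decide) (by decide) adj_i).1 (hk .i)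
    have g_j := (three k (by decide) (by decide) (by decide) adj_j).1 (hk .j)
    have g_k := (three k (by decide) (by decide) (by decide) adj_k).1 (hk .k)
    have g_l := (three k (by decide) (by decide) (by decide) adj_l).1 (hk .l)
    have g_m := (three k (by decide) (by decide) (by decide) adj_m).1 (hk .m)
    have g_n := (three k (by decide) (by decide) (by decide) adj_n).1 (hk .n)
    have g_o := (three k (by decide) (by decide) (by decide) adj_o).1 (hk .o)
    have g_p := (three k (by decide) (by decide) (by decide) adj_p).1 (hk .p)
    have g_q := (three k (by decide) (by decide) (by decide) adj_q).1 (hk .q)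
    have g_r := (three k (by decide) (by decide) (by decide) adj_r).1 (hk .r)
    have g_s := (three k (by decide) (by decide) (by decide) adj_s).1 (hk .s)
    have g_t := (three k (by decide) (by decide) (by decide) adj_t).1 (hk .t)
    have g_u := (three k (by decide) (by decide) (by decide) adj_u).1 (hk .u)
    have g_v := (three k (by decide) (by decide) (by decide) adj_v).1 (hk .v)
    have g_x := (three k (by decide) (by decide) (by decide) adj_x).1 (hk .x)
    have g_z1 := (three k (by decide) (by decide) (by decide) adj_z1).1 (hk .z1)
    have g_z3 := (three k (by decide) (by decide) (by decide) adj_z3).1 (hk .z3)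
    exact search (k .b) (k .c) (k .a) (k .g) (g_b) (k .e) (k .d) (g_c) (k .h) (k .j) (g_g) (k .f) (g_d) (k .v) (g_e) (k .i) (g_h) (k .s) (g_j) (k .k) (g_f) (k .l) (k .w) (g_v) (k .o) (g_i) (k .t) (k .z1) (g_s) (k .m) (g_k) (k .n) (g_l) (k .p) (g_m) (k .r) (g_o) (g_t) (k .z2) (g_z1) (k .u) (g_n) (k .q) (g_p) (g_r) (k .z3) (k .x) (g_u) (g_q) (g_x) (k .z4) (g_z3)
  · intro α β
    refine ⟨col α β, ?_, rfl, rfl, rfl, rfl, rfl, rfl, rfl, rfl⟩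
    intro y
    cases y
    · exact single _ adj_a
    · exact (three _ (by decide) (by decide) (by decide) adj_b).2 (by revert α β; decide)
    · exact (three _ (by decide) (by decide) (by decide) adj_c).2 (by revert α β; decide)
    · exact (three _ (by decide) (by decide) (by decide) adj_d).2 (by revert α β; decide)
    · exact (three _ (by decide) (by decide) (by decide) adj_e).2 (by revert α β; decide)
    · exact (three _ (by decide) (by decide) (by decide) adj_f).2 (by revert α β; decide)
    · exact (three _ (by decide) (by decide) (by decide) adj_g).2 (by revert α β; decide)
    · exact (three _ (by decide) (by decide) (by decide) adj_h).2 (by revert α β; decide)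
    · exact (three _ (by decide) (by decide) (by decide) adj_i).2 (by revert α β; decide)
    · exact (three _ (by decide) (by decide) (by decide) adj_j).2 (by revert α β; decide)
    · exact (three _ (by decide) (by decide) (by decide) adj_k).2 (by revert α β; decide)
    · exact (three _ (by decide) (by decide) (by decide) adj_l).2 (by revert α β; decide)
    · exact (three _ (by decide) (by decide) (by decide) adj_m).2 (by revert α β; decide)
    · exact (three _ (by decide) (by decide) (by decide) adj_n).2 (by revert α β; decide)
    · exact (three _ (by decide) (by decide) (by decide) adj_o).2 (by revert α β; decide)
    · exact (three _ (by decide) (by decide) (by decide) adj_p).2 (by revert α β; decide)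
    · exact (three _ (by decide) (by decide) (by decide) adj_q).2 (by revert α β; decide)
    · exact (three _ (by decide) (by decide) (by decide) adj_r).2 (by revert α β; decide)
    · exact (three _ (by decide) (by decide) (by decide) adj_s).2 (by revert α β; decide)
    · exact (three _ (by decide) (by decide) (by decide) adj_t).2 (by revert α β; decide)
    · exact (three _ (by decide) (by decide) (by decide) adj_u).2 (by revert α β; decide)
    · exact (three _ (by decide) (by decide) (by decide) adj_v).2 (by revert α β; decide)
    · exact single _ adj_w
    · exact (three _ (by decide) (by decide) (by decide) adj_x).2 (by revert α β; decide)
    · exact (three _ (by decide) (by decide) (by decide) adj_z1).2 (by revert α β; decide)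
    · exact single _ adj_z2
    · exact (three _ (by decide) (by decide) (by decide) adj_z3).2 (by revert α β; decide)
    · exact single _ adj_z4
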